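/- arXiv:1312.6820 — 8 statements merged into one kernel-verified Lean document; each statement's English description precedes it below -/
import Mathlib

section
/- Let A be a real m×n matrix, S a subset of column indices of A such that the Gram matrix A_{:S}ᵀA_{:S} is invertible, and P a subset of S with R = S \ P, so that A_{:P}ᵀA_{:P} is also invertible. Let P^(P) = A_{:P}(A_{:P}ᵀA_{:P})⁻¹A_{:P}ᵀ and P^(S) = A_{:S}(A_{:S}ᵀA_{:S})⁻¹A_{:S}ᵀ, let E = A − P^(P)A, assume E_{:R}ᵀE_{:R} is invertible, and let R^(R) = E_{:R}(E_{:R}ᵀE_{:R})⁻¹E_{:R}ᵀ. Then P^(S) = P^(P) + R^(R). -/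
open Matrix

/-- The `m × |S|` submatrix of `A` consisting of the columns indexed by `S`. -/
noncomputable def cols {m n : ℕ} (A : Matrix (Fin m) (Fin n) ℝ) (S : Finset (Fin n)) :
    Matrix (Fin m) {j // j ∈ S} ℝ :=
  Matrix.of fun i j => A i j.val

/-- The projection matrix `A_{:S} (A_{:S}ᵀ A_{:S})⁻¹ A_{:S}ᵀ` onto the span of the columns of `A`
indexed by `S`. -/
noncomputable def proj {m n : ℕ} (A : Matrix (Fin m) (Fin n) ℝ) (S : Finset (Fin n)) :
    Matrix (Fin m) (Fin m) ℝ :=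
  cols A S * ((cols A S)ᵀ * cols A S)⁻¹ * (cols A S)ᵀ

theorem cols_mul_iff {m n : ℕ} (M N : Matrix (Fin m) (Fin m) ℝ) (A B : Matrix (Fin m) (Fin n) ℝ)
    (S : Finset (Fin n)) :
    M * cols A S = N * cols B S ↔ ∀ j ∈ S, ∀ i, (M * A) i j = (N * B) i j := by
  constructor
  · intro h j hj i
    have := congrFun (congrFun h i) ⟨j, hj⟩
    simpa [Matrix.mul_apply, cols] using this
  · intro h
    ext i ⟨j, hj⟩
    have := h j hj i
    simpa [Matrix.mul_apply, cols] using this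

theorem proj_symm {m n : ℕ} (A : Matrix (Fin m) (Fin n) ℝ) (S : Finset (Fin n)) :
    (proj A S)ᵀ = proj A S := by
  simp [proj, Matrix.transpose_mul, Matrix.transpose_nonsing_inv, Matrix.mul_assoc]

theorem proj_mul_cols {m n : ℕ} (A : Matrix (Fin m) (Fin n) ℝ) (S : Finset (Fin n))
    (h : IsUnit ((cols A S)ᵀ * cols A S)) : proj A S * cols A S = cols A S := by
  rw [proj, Matrix.mul_assoc, Matrix.mul_assoc,
    Matrix.nonsing_inv_mul _ ((Matrix.isUnit_iff_isUnit_det _).1 h), Matrix.mul_one]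

theorem mul_proj_of {m n : ℕ} (M : Matrix (Fin m) (Fin m) ℝ) (A : Matrix (Fin m) (Fin n) ℝ)
    (S : Finset (Fin n)) (h : M * cols A S = cols A S) : M * proj A S = proj A S := by
  rw [proj, ← Matrix.mul_assoc, ← Matrix.mul_assoc, h]

theorem cols_sub_mul {m n : ℕ} (M : Matrix (Fin m) (Fin m) ℝ) (A : Matrix (Fin m) (Fin n) ℝ)
    (S : Finset (Fin n)) : cols (A - M * A) S = cols A S - M * cols A S := by
  ext i j
  simp [cols, Matrix.mul_apply]

theorem cols_fix_mono {m n : ℕ} (M : Matrix (Fin m) (Fin m) ℝ) (A : Matrix (Fin m) (Fin n) ℝ)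
    (S T : Finset (Fin n)) (hT : T ⊆ S) (h : M * cols A S = cols A S) :
    M * cols A T = cols A T := by
  have h1 := (cols_mul_iff M 1 A A S).1 (by rw [h, Matrix.one_mul])
  have h2 := (cols_mul_iff M 1 A A T).2 (fun j hj => h1 j (hT hj))
  rwa [Matrix.one_mul] at h2

theorem stmt0 {m n : ℕ} (A : Matrix (Fin m) (Fin n) ℝ) (S P : Finset (Fin n)) (hPS : P ⊆ S)
    (hS : IsUnit ((cols A S)ᵀ * cols A S)) (hP : IsUnit ((cols A P)ᵀ * cols A P))
    (E : Matrix (Fin m) (Fin n) ℝ) (hE : E = A - proj A P * A)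
    (hR : IsUnit ((cols E (S \ P))ᵀ * cols E (S \ P))) :
    proj A S = proj A P + proj E (S \ P) := by
  have hSf := proj_mul_cols A S hS
  have hPf := proj_mul_cols A P hP
  have hRf := proj_mul_cols E (S \ P) hR
  have hER : cols E (S \ P) = cols A (S \ P) - proj A P * cols A (S \ P) := by
    rw [hE, cols_sub_mul]
  have hPP : proj A P * proj A P = proj A P := mul_proj_of _ _ _ hPf
  have hSP : proj A S * proj A P = proj A P :=
    mul_proj_of _ _ _ (cols_fix_mono _ _ _ _ hPS hSf)
  have hSR : proj A S * proj E (S \ P) = proj E (S \ P) := by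
    apply mul_proj_of
    rw [hER, Matrix.mul_sub, ← Matrix.mul_assoc, hSP,
      cols_fix_mono _ _ _ _ Finset.sdiff_subset hSf]
  have hPR : proj A P * proj E (S \ P) = 0 := by
    have : proj A P * cols E (S \ P) = 0 := by
      rw [hER, Matrix.mul_sub, ← Matrix.mul_assoc, hPP, sub_self]
    rw [proj.eq_def E, ← Matrix.mul_assoc, ← Matrix.mul_assoc, this, Matrix.zero_mul,
      Matrix.zero_mul]
  have hRP : proj E (S \ P) * proj A P = 0 := by
    have := congrArg Matrix.transpose hPR
    rwa [Matrix.transpose_mul, proj_symm, proj_symm, Matrix.transpose_zero] at this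
  have hQP : (proj A P + proj E (S \ P)) * cols A P = cols A P := by
    have : proj E (S \ P) * cols A P = 0 := by
      rw [← hPf, ← Matrix.mul_assoc, hRP, Matrix.zero_mul]
    rw [Matrix.add_mul, hPf, this, add_zero]
  have hQR : (proj A P + proj E (S \ P)) * cols A (S \ P) = cols A (S \ P) := by
    have h1 : proj E (S \ P) * cols A (S \ P) = cols E (S \ P) := by
      conv_rhs => rw [← hRf, hER, Matrix.mul_sub, ← Matrix.mul_assoc, hRP, Matrix.zero_mul, sub_zero]
    rw [Matrix.add_mul, h1, hER, add_sub_cancel]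
  have hQS : (proj A P + proj E (S \ P)) * cols A S = cols A S := by
    have h1 := (cols_mul_iff _ 1 A A _).1 (hQP.trans (Matrix.one_mul _).symm)
    have h2 := (cols_mul_iff _ 1 A A _).1 (hQR.trans (Matrix.one_mul _).symm)
    refine ((cols_mul_iff _ 1 A A S).2 fun j hj => ?_).trans (Matrix.one_mul _)
    by_cases hjP : j ∈ P
    · exact h1 j hjP
    · exact h2 j (Finset.mem_sdiff.2 ⟨hj, hjP⟩)
  have h3 := congrArg Matrix.transpose (mul_proj_of _ _ _ hQS)
  rw [Matrix.transpose_mul, Matrix.transpose_add, proj_symm, proj_symm, proj_symm,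
    Matrix.mul_add, hSP, hSR] at h3
  exact h3.symm
end

section
/- Let E be a real m×n matrix, F a real m×r matrix, and p a column index of E with E_{:p}ᵀE_{:p} > 0. Set ω = EᵀE_{:p}/√(E_{:p}ᵀE_{:p}) ∈ ℝⁿ and υ = FᵀE_{:p}/√(E_{:p}ᵀE_{:p}) ∈ ℝʳ. Let R = E_{:p}(E_{:p}ᵀE_{:p})⁻¹E_{:p}ᵀ, and define the updated matrices E' = E − RE, F' = F − RF, H = FᵀE, H' = F'ᵀE', G = EᵀE, G' = E'ᵀE'. Then for every column index i: ‖H'_{:i}‖² = ‖H_{:i}‖² − 2ω_i⟨H_{:i}, υ⟩ + ‖υ‖²ω_i², and G'_{ii} = G_{ii} − ω_i². Equivalently, with f_i = ‖H_{:i}‖², g_i = G_{ii}, f'_i = ‖H'_{:i}‖², g'_i = G'_{ii}, the vectors satisfy f' = f − 2(ω ∘ Hᵀυ) + ‖υ‖²(ω ∘ ω) and g' = g − (ω ∘ ω), where ∘ is the Hadamard (entrywise) product. -/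
open Matrix

theorem aux_upd {m a b : ℕ} (A : Matrix (Fin m) (Fin a) ℝ) (B : Matrix (Fin m) (Fin b) ℝ)
    (e : Fin m → ℝ) (hpos : 0 < e ⬝ᵥ e) (k : Fin a) (i : Fin b) :
    ((A - ((e ⬝ᵥ e)⁻¹ • vecMulVec e e) * A)ᵀ * (B - ((e ⬝ᵥ e)⁻¹ • vecMulVec e e) * B)) k i =
      (Aᵀ * B) k i - ((Real.sqrt (e ⬝ᵥ e))⁻¹ • (Aᵀ *ᵥ e)) k *
        ((Real.sqrt (e ⬝ᵥ e))⁻¹ • (Bᵀ *ᵥ e)) i := by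
  have hs : (Real.sqrt (e ⬝ᵥ e))⁻¹ * (Real.sqrt (e ⬝ᵥ e))⁻¹ = (e ⬝ᵥ e)⁻¹ := by
    rw [← mul_inv, Real.mul_self_sqrt hpos.le]
  have key : ∀ {c : ℕ} (C : Matrix (Fin m) (Fin c) ℝ) (j : Fin m) (l : Fin c),
      (C - ((e ⬝ᵥ e)⁻¹ • vecMulVec e e) * C) j l
        = C j l - (e ⬝ᵥ e)⁻¹ * (Cᵀ *ᵥ e) l * e j := by
    intro c C j l
    simp only [Matrix.sub_apply, Matrix.smul_mul, Matrix.smul_apply, Matrix.mul_apply,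
      vecMulVec_apply, mulVec, dotProduct, transpose_apply, smul_eq_mul]
    rw [mul_assoc, Finset.sum_mul]
    congr 2
    exact Finset.sum_congr rfl fun x _ => by ring
  simp only [Pi.smul_apply, smul_eq_mul]
  set α := (Aᵀ *ᵥ e) k with hα
  set β := (Bᵀ *ᵥ e) i with hβ
  have hα' : ∑ j, A j k * e j = α := rfl
  have hβ' : ∑ j, B j i * e j = β := rfl
  have hd : ∑ j, e j * e j = e ⬝ᵥ e := rfl
  have e1 : (Real.sqrt (e ⬝ᵥ e))⁻¹ * α * ((Real.sqrt (e ⬝ᵥ e))⁻¹ * β)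
      = (e ⬝ᵥ e)⁻¹ * (α * β) := by rw [← hs]; ring
  rw [e1, Matrix.mul_apply, Matrix.mul_apply]
  simp only [transpose_apply, key, ← hα, ← hβ]
  set d := e ⬝ᵥ e with hdd
  have e2 : ∑ j, (A j k - d⁻¹ * α * e j) * (B j i - d⁻¹ * β * e j)
      = ∑ j, A j k * B j i - d⁻¹ * β * ∑ j, A j k * e j - d⁻¹ * α * ∑ j, B j i * e j
        + d⁻¹ * α * (d⁻¹ * β) * ∑ j, e j * e j := by
    simp only [Finset.mul_sum, ← Finset.sum_sub_distrib, ← Finset.sum_add_distrib]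
    exact Finset.sum_congr rfl fun x _ => by ring
  rw [e2, hα', hβ', hd]
  have : d ≠ 0 := hpos.ne'
  field_simp
  ring

theorem stmt2 {m n r : ℕ} (E : Matrix (Fin m) (Fin n) ℝ) (F : Matrix (Fin m) (Fin r) ℝ)
    (p : Fin n) (e : Fin m → ℝ) (he : e = fun i => E i p)
    (hpos : 0 < e ⬝ᵥ e)
    (ω : Fin n → ℝ) (hω : ω = (Real.sqrt (e ⬝ᵥ e))⁻¹ • (Eᵀ *ᵥ e))
    (υ : Fin r → ℝ) (hυ : υ = (Real.sqrt (e ⬝ᵥ e))⁻¹ • (Fᵀ *ᵥ e))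
    (R : Matrix (Fin m) (Fin m) ℝ) (hR : R = (e ⬝ᵥ e)⁻¹ • vecMulVec e e)
    (E' : Matrix (Fin m) (Fin n) ℝ) (hE' : E' = E - R * E)
    (F' : Matrix (Fin m) (Fin r) ℝ) (hF' : F' = F - R * F)
    (H H' : Matrix (Fin r) (Fin n) ℝ) (hH : H = Fᵀ * E) (hH' : H' = F'ᵀ * E')
    (G G' : Matrix (Fin n) (Fin n) ℝ) (hG : G = Eᵀ * E) (hG' : G' = E'ᵀ * E') :
    ∀ i : Fin n,
      ((fun k => H' k i) ⬝ᵥ fun k => H' k i) =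
        ((fun k => H k i) ⬝ᵥ fun k => H k i) - 2 * ω i * ((fun k => H k i) ⬝ᵥ υ)
          + (υ ⬝ᵥ υ) * ω i ^ 2
      ∧ G' i i = G i i - ω i ^ 2 := by
  intro i
  have h1 : ∀ k, H' k i = H k i - υ k * ω i := by
    intro k
    rw [hH', hH, hE', hF', hR, hυ, hω]
    exact aux_upd F E e hpos k i
  constructor
  · simp only [h1, dotProduct, Finset.mul_sum, Finset.sum_mul, ← Finset.sum_sub_distrib,
      ← Finset.sum_add_distrib]
    exact Finset.sum_congr rfl fun x _ => by ring
  · rw [hG', hG, hE', hR, hω, sq]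
    exact aux_upd E E e hpos i i
end

section
/- Let A be a real m×n matrix, B a real m×r matrix, and P, R subsets of the column indices of A with A_{:P}ᵀA_{:P} invertible. Let P^(P) = A_{:P}(A_{:P}ᵀA_{:P})⁻¹A_{:P}ᵀ, E = A − P^(P)A, and F = B − P^(P)B. Then E_{:R}ᵀB = E_{:R}ᵀF; consequently, if E_{:R}ᵀE_{:R} is invertible and R^(R) = E_{:R}(E_{:R}ᵀE_{:R})⁻¹E_{:R}ᵀ, then R^(R)B = R^(R)F. -/
open Matrix

theorem cols_proj_aux {m n : ℕ} (A : Matrix (Fin m) (Fin n) ℝ) (S : Finset (Fin n))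
    (h : IsUnit ((cols A S)ᵀ * cols A S)) : (proj A S)ᵀ = proj A S ∧ proj A S * proj A S = proj A S := by
  have hd := (Matrix.isUnit_iff_isUnit_det _).1 h
  constructor
  · simp only [proj, transpose_mul, transpose_transpose, transpose_nonsing_inv, Matrix.mul_assoc]
  · unfold proj
    calc _ = cols A S * (((cols A S)ᵀ * cols A S)⁻¹ * ((cols A S)ᵀ * cols A S)) *
          ((cols A S)ᵀ * cols A S)⁻¹ * (cols A S)ᵀ := by simp only [Matrix.mul_assoc]
      _ = _ := by rw [Matrix.nonsing_inv_mul _ hd, Matrix.mul_one]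

theorem stmt6 {m n r : ℕ} (A : Matrix (Fin m) (Fin n) ℝ) (B : Matrix (Fin m) (Fin r) ℝ)
    (P R : Finset (Fin n)) (hP : IsUnit ((cols A P)ᵀ * cols A P))
    (E : Matrix (Fin m) (Fin n) ℝ) (hE : E = A - proj A P * A)
    (F : Matrix (Fin m) (Fin r) ℝ) (hF : F = B - proj A P * B) :
    (cols E R)ᵀ * B = (cols E R)ᵀ * F ∧
      (IsUnit ((cols E R)ᵀ * cols E R) → proj E R * B = proj E R * F) := by
  obtain ⟨h1, h2⟩ := cols_proj_aux A P hP
  have h3 : proj A P * E = 0 := by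
    rw [hE, Matrix.mul_sub, ← Matrix.mul_assoc, h2, sub_self]
  have h4 : proj A P * cols E R = 0 := by
    ext i j
    exact congrFun (congrFun h3 i) j.val
  have h5 : (cols E R)ᵀ * proj A P = 0 := by
    have := congrArg Matrix.transpose h4
    rwa [transpose_mul, h1, transpose_zero] at this
  have h6 : (cols E R)ᵀ * B = (cols E R)ᵀ * F := by
    rw [hF, Matrix.mul_sub, ← Matrix.mul_assoc, h5, Matrix.zero_mul, sub_zero]
  refine ⟨h6, fun _ => ?_⟩
  unfold proj
  rw [Matrix.mul_assoc, h6, ← Matrix.mul_assoc]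
end

section
/- Let A be a real m×n matrix, B a real m×r matrix, S a subset of column indices of A with A_{:S}ᵀA_{:S} invertible, and i a column index not in S such that A_{:S∪{i}}ᵀA_{:S∪{i}} is invertible. Let P^(S) be the projection matrix onto the span of the columns of A indexed by S, E = A − P^(S)A, and F = B − P^(S)B. Then E_{:i}ᵀE_{:i} > 0 and ‖B − P^(S∪{i})B‖_F² = ‖B − P^(S)B‖_F² − ‖FᵀE_{:i}‖²/(E_{:i}ᵀE_{:i}). In particular, minimizing the residual ‖B − P^(S∪{i})B‖_F² over candidate columns i is equivalent to maximizing ‖FᵀE_{:i}‖²/(E_{:i}ᵀE_{:i}). -/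
open Matrix

/-- The squared Frobenius norm `‖M‖_F² = tr(MᵀM)`. -/
noncomputable def frobSq {m r : ℕ} (M : Matrix (Fin m) (Fin r) ℝ) : ℝ :=
  Matrix.trace (Mᵀ * M)

theorem proj_cols {m n : ℕ} (A : Matrix (Fin m) (Fin n) ℝ) (S : Finset (Fin n))
    (hS : IsUnit ((cols A S)ᵀ * cols A S)) : proj A S * cols A S = cols A S := by
  have h := (Matrix.isUnit_iff_isUnit_det _).1 hS
  rw [proj, Matrix.mul_assoc, Matrix.mul_assoc, Matrix.nonsing_inv_mul _ h, Matrix.mul_one]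

theorem proj_idem {m n : ℕ} (A : Matrix (Fin m) (Fin n) ℝ) (S : Finset (Fin n))
    (hS : IsUnit ((cols A S)ᵀ * cols A S)) : proj A S * proj A S = proj A S := by
  conv_lhs => rhs; rw [proj]
  rw [← Matrix.mul_assoc, ← Matrix.mul_assoc, proj_cols A S hS, proj]

theorem proj_col {m n : ℕ} (A : Matrix (Fin m) (Fin n) ℝ) (S : Finset (Fin n))
    (hS : IsUnit ((cols A S)ᵀ * cols A S)) (j : Fin n) (hj : j ∈ S) :
    proj A S *ᵥ (fun k => A k j) = fun k => A k j := by
  have h := proj_cols A S hS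
  funext k
  exact congrFun (congrFun h k) ⟨j, hj⟩

theorem mul_cols_eq {m n : ℕ} (A : Matrix (Fin m) (Fin n) ℝ) (S : Finset (Fin n))
    (R : Matrix (Fin m) (Fin m) ℝ)
    (h : ∀ j ∈ S, R *ᵥ (fun k => A k j) = fun k => A k j) : R * cols A S = cols A S := by
  ext k j
  exact congrFun (h j.1 j.2) k

theorem proj_trace {m n : ℕ} (A : Matrix (Fin m) (Fin n) ℝ) (S : Finset (Fin n))
    (hS : IsUnit ((cols A S)ᵀ * cols A S)) : (proj A S).trace = S.card := by
  have h := (Matrix.isUnit_iff_isUnit_det _).1 hS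
  rw [proj, Matrix.mul_assoc, Matrix.trace_mul_comm, Matrix.mul_assoc,
    Matrix.nonsing_inv_mul _ h, Matrix.trace_one]
  simp

theorem frob_proj {m n r : ℕ} (A : Matrix (Fin m) (Fin n) ℝ) (B : Matrix (Fin m) (Fin r) ℝ)
    (S : Finset (Fin n)) (hS : IsUnit ((cols A S)ᵀ * cols A S)) :
    frobSq (B - proj A S * B) = (Bᵀ * B).trace - (Bᵀ * proj A S * B).trace := by
  have h : (B - proj A S * B)ᵀ * (B - proj A S * B) = Bᵀ * B - Bᵀ * proj A S * B := by
    have h2 : Bᵀ * proj A S * (proj A S * B) = Bᵀ * proj A S * B := by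
      rw [Matrix.mul_assoc, ← Matrix.mul_assoc (proj A S), proj_idem A S hS, Matrix.mul_assoc]
    rw [Matrix.transpose_sub, Matrix.transpose_mul, proj_symm, Matrix.sub_mul, Matrix.mul_sub,
      Matrix.mul_sub, h2, Matrix.mul_assoc]
    abel
  rw [frobSq, h, Matrix.trace_sub]

theorem proj_insert {m n : ℕ} (A : Matrix (Fin m) (Fin n) ℝ)
    (S : Finset (Fin n)) (i : Fin n)
    (hS : IsUnit ((cols A S)ᵀ * cols A S))
    (hSi : IsUnit ((cols A (insert i S))ᵀ * cols A (insert i S)))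
    (e : Fin m → ℝ) (he : e = (fun k => A k i) - proj A S *ᵥ (fun k => A k i)) :
    proj A (insert i S) = proj A S + (e ⬝ᵥ e)⁻¹ • vecMulVec e e := by
  have hPe : proj A S *ᵥ e = 0 := by
    rw [he, Matrix.mulVec_sub, Matrix.mulVec_mulVec, proj_idem A S hS, sub_self]
  have hdot : ∀ v, e ⬝ᵥ (proj A S *ᵥ v) = 0 := by
    intro v
    rw [Matrix.dotProduct_mulVec, ← Matrix.mulVec_transpose, proj_symm, hPe, zero_dotProduct]
  have hei : e ⬝ᵥ (fun k => A k i) = e ⬝ᵥ e := by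
    conv_rhs => rhs; rw [he]
    rw [dotProduct_sub, hdot, sub_zero]
  set Q := proj A (insert i S) with hQ
  set R := proj A S + (e ⬝ᵥ e)⁻¹ • vecMulVec e e with hR
  have hRs : Rᵀ = R := by
    simp [hR, proj_symm, Matrix.transpose_vecMulVec]
  have hRv : ∀ v, R *ᵥ v = proj A S *ᵥ v + ((e ⬝ᵥ e)⁻¹ * (e ⬝ᵥ v)) • e := by
    intro v
    rw [hR, Matrix.add_mulVec, Matrix.smul_mulVec, Matrix.vecMulVec_mulVec]
    ext k
    simp
    ring
  have hRD : R * cols A (insert i S) = cols A (insert i S) := by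
    apply mul_cols_eq
    intro j hj
    rw [hRv]
    rcases Finset.mem_insert.1 hj with rfl | hj
    · rw [hei]
      by_cases h0 : e = 0
      · rw [h0, smul_zero, add_zero]
        rw [h0] at he
        exact (sub_eq_zero.1 he.symm).symm
      · rw [inv_mul_cancel₀ (by rwa [ne_eq, dotProduct_self_eq_zero]), one_smul]
        rw [he]
        abel
    · rw [← proj_col A S hS j hj, hdot, proj_col A S hS j hj, proj_col A S hS j hj]
      simp
  have hQP : Q * proj A S = proj A S := by
    have : Q * cols A S = cols A S := mul_cols_eq A S Q
      fun j hj => proj_col A _ hSi j (Finset.mem_insert_of_mem hj)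
    rw [proj, ← Matrix.mul_assoc, ← Matrix.mul_assoc, this]
  have hQe : Q *ᵥ e = e := by
    rw [he, Matrix.mulVec_sub, Matrix.mulVec_mulVec, hQP, 
      proj_col A _ hSi i (Finset.mem_insert_self _ _)]
  have hQR : Q * R = R := by
    rw [hR, Matrix.mul_add, hQP, Matrix.mul_smul, Matrix.mul_vecMulVec, hQe]
  have hRQ : R * Q = Q := by
    rw [hQ, proj, ← Matrix.mul_assoc, ← Matrix.mul_assoc, hRD]
  have := congrArg Matrix.transpose hQR
  rw [Matrix.transpose_mul, hRs, hQ, proj_symm, ← hQ, hRQ] at this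
  exact this

theorem stmt9 {m n r : ℕ} (A : Matrix (Fin m) (Fin n) ℝ) (B : Matrix (Fin m) (Fin r) ℝ)
    (S : Finset (Fin n)) (i : Fin n) (hi : i ∉ S)
    (hS : IsUnit ((cols A S)ᵀ * cols A S))
    (hSi : IsUnit ((cols A (insert i S))ᵀ * cols A (insert i S)))
    (E : Matrix (Fin m) (Fin n) ℝ) (hE : E = A - proj A S * A)
    (F : Matrix (Fin m) (Fin r) ℝ) (hF : F = B - proj A S * B)
    (e : Fin m → ℝ) (he : e = fun k => E k i) :
    0 < e ⬝ᵥ e ∧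
      frobSq (B - proj A (insert i S) * B) =
        frobSq (B - proj A S * B) - ((Fᵀ *ᵥ e) ⬝ᵥ (Fᵀ *ᵥ e)) / (e ⬝ᵥ e) := by
  have he' : e = (fun k => A k i) - proj A S *ᵥ (fun k => A k i) := by
    rw [he, hE]
    rfl
  have hQ := proj_insert A S i hS hSi e he'
  have hPe : proj A S *ᵥ e = 0 := by
    rw [he', Matrix.mulVec_sub, Matrix.mulVec_mulVec, proj_idem A S hS, sub_self]
  constructor
  · have hne : e ≠ 0 := by
      intro h0
      have h := proj_trace A _ hSi
      rw [hQ, h0] at h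
      simp [proj_trace A S hS, Finset.card_insert_of_notMem hi] at h
    have h1 : e ⬝ᵥ e ≠ 0 := by rwa [ne_eq, dotProduct_self_eq_zero]
    have h2 : 0 ≤ e ⬝ᵥ e := Finset.sum_nonneg fun k _ => mul_self_nonneg (e k)
    exact lt_of_le_of_ne h2 h1.symm
  · have hFe : Fᵀ *ᵥ e = Bᵀ *ᵥ e := by
      rw [hF, Matrix.transpose_sub, Matrix.transpose_mul, proj_symm, Matrix.sub_mulVec,
        ← Matrix.mulVec_mulVec, hPe, Matrix.mulVec_zero, sub_zero]
    rw [frob_proj A B _ hSi, frob_proj A B _ hS, hFe, hQ, Matrix.mul_add, Matrix.add_mul,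
      Matrix.trace_add, Matrix.mul_smul, Matrix.smul_mul, Matrix.trace_smul,
      Matrix.mul_vecMulVec, Matrix.vecMulVec_mul, ← Matrix.mulVec_transpose,
      Matrix.trace_vecMulVec, smul_eq_mul]
    ring
end

section
/- Let A be a real m×n matrix, B a real m×r matrix, S a subset of column indices of A with A_{:S}ᵀA_{:S} invertible, and p a column index not in S such that A_{:S∪{p}}ᵀA_{:S∪{p}} is invertible. Let E = A − P^(S)A and F = B − P^(S)B be the residual matrices, and let R = E_{:p}(E_{:p}ᵀE_{:p})⁻¹E_{:p}ᵀ (well-defined since E_{:p}ᵀE_{:p} > 0). Then the residual matrices after adding p satisfy B − P^(S∪{p})B = F − RF and A − P^(S∪{p})A = E − RE. -/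
open Matrix

theorem proj_fix {m n : ℕ} (A : Matrix (Fin m) (Fin n) ℝ) (S : Finset (Fin n))
    (hS : IsUnit ((cols A S)ᵀ * cols A S)) (j : Fin n) (hj : j ∈ S) (i : Fin m) :
    (proj A S * A) i j = A i j := by
  have h : proj A S * cols A S = cols A S := by
    unfold proj
    rw [Matrix.mul_assoc, Matrix.mul_assoc,
      Matrix.nonsing_inv_mul _ ((Matrix.isUnit_iff_isUnit_det _).1 hS), Matrix.mul_one]
  have := congrFun (congrFun h i) ⟨j, hj⟩
  simpa [Matrix.mul_apply, cols] using this

theorem mul_proj_of_fix {m n : ℕ} (A : Matrix (Fin m) (Fin n) ℝ) (S : Finset (Fin n))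
    (M : Matrix (Fin m) (Fin m) ℝ) (h : ∀ j ∈ S, ∀ i, (M * A) i j = A i j) :
    M * proj A S = proj A S := by
  have h1 : M * cols A S = cols A S := by
    ext i j
    have := h j.1 j.2 i
    simpa [Matrix.mul_apply, cols] using this
  unfold proj
  rw [← Matrix.mul_assoc, ← Matrix.mul_assoc, h1]

theorem stmt10 {m n r : ℕ} (A : Matrix (Fin m) (Fin n) ℝ) (B : Matrix (Fin m) (Fin r) ℝ)
    (S : Finset (Fin n)) (p : Fin n) (hp : p ∉ S)
    (hS : IsUnit ((cols A S)ᵀ * cols A S))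
    (hSp : IsUnit ((cols A (insert p S))ᵀ * cols A (insert p S)))
    (E : Matrix (Fin m) (Fin n) ℝ) (hE : E = A - proj A S * A)
    (F : Matrix (Fin m) (Fin r) ℝ) (hF : F = B - proj A S * B)
    (e : Fin m → ℝ) (he : e = fun k => E k p)
    (R : Matrix (Fin m) (Fin m) ℝ) (hR : R = (e ⬝ᵥ e)⁻¹ • vecMulVec e e) :
    B - proj A (insert p S) * B = F - R * F ∧ A - proj A (insert p S) * A = E - R * E := by
  have hPP : proj A S * proj A S = proj A S := mul_proj_of_fix A S _ (proj_fix A S hS)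
  have hsub : proj A (insert p S) * proj A S = proj A S :=
    mul_proj_of_fix A S _ fun j hj => proj_fix A _ hSp j (Finset.mem_insert_of_mem hj)
  have hPsym := proj_symm A S
  have hP'sym := proj_symm A (insert p S)
  have hfixS := proj_fix A S hS
  have hfixp := proj_fix A _ hSp p (Finset.mem_insert_self p S)
  set P := proj A S with hPdef
  set P' := proj A (insert p S) with hP'def
  have hPE : P * E = 0 := by rw [hE, Matrix.mul_sub, ← Matrix.mul_assoc, hPP, sub_self]
  have hP'E : P' * E = P' * A - P * A := by
    rw [hE, Matrix.mul_sub, ← Matrix.mul_assoc, hsub]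
  have hPe : P *ᵥ e = 0 := by
    ext i
    have := congrFun (congrFun hPE i) p
    rw [he]
    simpa [Matrix.mul_apply, Matrix.mulVec, dotProduct] using this
  have heP : e ᵥ* P = 0 := by
    rw [← hPsym, Matrix.vecMul_transpose, hPe]
  have hP'e : P' *ᵥ e = e := by
    ext i
    have h1 := congrFun (congrFun hP'E i) p
    have h2 : (P' * E) i p = (P' *ᵥ e) i := by
      rw [he]; simp [Matrix.mul_apply, Matrix.mulVec, dotProduct]
    rw [← h2, h1, Matrix.sub_apply, hfixp, he, hE]; rfl
  have hRP : R * P = 0 := by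
    rw [hR, Matrix.smul_mul, Matrix.vecMulVec_mul, heP]; simp
  have hP'R : P' * R = R := by
    rw [hR, Matrix.mul_smul, Matrix.mul_vecMulVec, hP'e]
  have hRsym : Rᵀ = R := by
    rw [hR, Matrix.transpose_smul, Matrix.transpose_vecMulVec]
  have hRA : R * A = R * E := by
    rw [hE, Matrix.mul_sub, ← Matrix.mul_assoc, hRP, Matrix.zero_mul, sub_zero]
  have hRE : ∀ i j, (R * E) i j = (e ⬝ᵥ e)⁻¹ * (e i * (e ⬝ᵥ fun k => E k j)) := by
    intro i j
    rw [hR, Matrix.smul_mul, Matrix.vecMulVec_mul]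
    simp [Matrix.vecMulVec_apply, Matrix.vecMul]
  have hQ : (P + R) * P' = P' := by
    refine mul_proj_of_fix A _ _ fun j hj i => ?_
    rw [Matrix.add_mul, Matrix.add_apply, hRA, hRE]
    rcases Finset.mem_insert.1 hj with rfl | hj
    · rw [← he]
      have hEi : e i = A i j - (P * A) i j := by rw [he, hE]; rfl
      by_cases h0 : e ⬝ᵥ e = 0
      · have : e = 0 := dotProduct_self_eq_zero.1 h0
        have : e i = 0 := by rw [this]; rfl
        rw [h0]; linarith
      · field_simp
        linarith
    · have : (fun k => E k j) = 0 := by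
        ext k
        rw [hE, Matrix.sub_apply, hfixS j hj]; simp
      rw [this, hfixS j hj]; simp
  have hQ2 : P' * (P + R) = P + R := by rw [Matrix.mul_add, hsub, hP'R]
  have key : P' = P + R := by
    have := congrArg Matrix.transpose hQ
    rw [Matrix.transpose_mul, Matrix.transpose_add, hPsym, hRsym, hP'sym, hQ2] at this
    exact this.symm
  constructor
  · rw [key, hF, Matrix.mul_sub, ← Matrix.mul_assoc R, hRP, Matrix.add_mul, Matrix.zero_mul]
    abel
  · rw [key, ← hRA, hE, Matrix.add_mul]
    abel
end

section
/- Let E be a real m×n matrix, F a real m×r matrix, and p a column index of E with E_{:p}ᵀE_{:p} > 0. Set ω = EᵀE_{:p}/√(E_{:p}ᵀE_{:p}) ∈ ℝⁿ and υ = FᵀE_{:p}/√(E_{:p}ᵀE_{:p}) ∈ ℝʳ, and let R = E_{:p}(E_{:p}ᵀE_{:p})⁻¹E_{:p}ᵀ. Then (F − RF)ᵀ(E − RE) = FᵀE − υωᵀ; that is, the updated matrix H' = F'ᵀE' of inner products between the residual target and source columns is obtained from H = FᵀE by a rank-one update H' = H − υωᵀ. -/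
open Matrix

theorem stmt11 {m n r : ℕ} (E : Matrix (Fin m) (Fin n) ℝ) (F : Matrix (Fin m) (Fin r) ℝ)
    (p : Fin n) (e : Fin m → ℝ) (he : e = fun i => E i p) (hpos : 0 < e ⬝ᵥ e)
    (ω : Fin n → ℝ) (hω : ω = (Real.sqrt (e ⬝ᵥ e))⁻¹ • (Eᵀ *ᵥ e))
    (υ : Fin r → ℝ) (hυ : υ = (Real.sqrt (e ⬝ᵥ e))⁻¹ • (Fᵀ *ᵥ e))
    (R : Matrix (Fin m) (Fin m) ℝ) (hR : R = (e ⬝ᵥ e)⁻¹ • vecMulVec e e) :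
    (F - R * F)ᵀ * (E - R * E) = Fᵀ * E - vecMulVec υ ω := by
  clear he
  have hT : Rᵀ = R := by
    rw [hR, transpose_smul, transpose_vecMulVec]
  have hRR : R * R = R := by
    rw [hR, smul_mul_smul_comm, vecMulVec_mul_vecMulVec, vecMulVec_smul, smul_smul]
    congr 1
    field_simp
  have hout : vecMulVec υ ω = Fᵀ * (R * E) := by
    have hs : (Real.sqrt (e ⬝ᵥ e))⁻¹ * (Real.sqrt (e ⬝ᵥ e))⁻¹ = (e ⬝ᵥ e)⁻¹ := by
      rw [← mul_inv, Real.mul_self_sqrt hpos.le]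
    rw [hυ, hω, hR, Matrix.smul_mul, Matrix.mul_smul, vecMulVec_mul, mul_vecMulVec,
      mulVec_transpose E e, smul_vecMulVec, vecMulVec_smul, smul_smul, hs]
  have h2 : R * (R * E) = R * E := by rw [← Matrix.mul_assoc, hRR]
  rw [hout, transpose_sub, transpose_mul, hT, Matrix.sub_mul, Matrix.mul_sub, Matrix.mul_assoc,
    Matrix.mul_sub, h2, sub_self, Matrix.mul_zero, sub_zero]
end

section
/- Let E be a real m×n matrix and p a column index of E with E_{:p}ᵀE_{:p} > 0. Set ω = EᵀE_{:p}/√(E_{:p}ᵀE_{:p}) ∈ ℝⁿ and let R = E_{:p}(E_{:p}ᵀE_{:p})⁻¹E_{:p}ᵀ. Then (E − RE)ᵀ(E − RE) = EᵀE − ωωᵀ; that is, the Gram matrix G' = E'ᵀE' of the updated residual E' = E − RE is obtained from G = EᵀE by the rank-one update G' = G − ωωᵀ. -/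
open Matrix

theorem stmt12 {m n : ℕ} (E : Matrix (Fin m) (Fin n) ℝ)
    (p : Fin n) (e : Fin m → ℝ) (he : e = fun i => E i p) (hpos : 0 < e ⬝ᵥ e)
    (ω : Fin n → ℝ) (hω : ω = (Real.sqrt (e ⬝ᵥ e))⁻¹ • (Eᵀ *ᵥ e))
    (R : Matrix (Fin m) (Fin m) ℝ) (hR : R = (e ⬝ᵥ e)⁻¹ • vecMulVec e e) :
    (E - R * E)ᵀ * (E - R * E) = Eᵀ * E - vecMulVec ω ω := by
  have hT : Rᵀ = R := by
    rw [hR, transpose_smul, transpose_vecMulVec]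
  have hRR : R * R = R := by
    rw [hR, smul_mul_smul_comm, vecMulVec_mul_vecMulVec, vecMulVec_smul, smul_smul]
    congr 1
    field_simp
  have hW : vecMulVec ω ω = Eᵀ * (R * E) := by
    rw [hω, hR, Matrix.smul_mul, Matrix.mul_smul, vecMulVec_mul, mul_vecMulVec, smul_vecMulVec, vecMulVec_smul,
      smul_smul, ← mul_inv, Real.mul_self_sqrt hpos.le, mulVec_transpose]
  rw [hW, transpose_sub, transpose_mul, hT, Matrix.sub_mul, Matrix.mul_sub, Matrix.mul_sub,
    Matrix.mul_assoc, Matrix.mul_assoc, ← Matrix.mul_assoc R R E, hRR]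
  simp
end

section
/- Let A be a real m×n matrix and B a real m×r matrix. Define sequences of residual matrices by E⁽⁰⁾ = A, F⁽⁰⁾ = B, and for t = 1, …, l: given a selected column index p_t with (E⁽ᵗ⁻¹⁾_{:p_t})ᵀE⁽ᵗ⁻¹⁾_{:p_t} > 0, set ω⁽ᵗ⁾ = (E⁽ᵗ⁻¹⁾)ᵀE⁽ᵗ⁻¹⁾_{:p_t}/√((E⁽ᵗ⁻¹⁾_{:p_t})ᵀE⁽ᵗ⁻¹⁾_{:p_t}), υ⁽ᵗ⁾ = (F⁽ᵗ⁻¹⁾)ᵀE⁽ᵗ⁻¹⁾_{:p_t}/√((E⁽ᵗ⁻¹⁾_{:p_t})ᵀE⁽ᵗ⁻¹⁾_{:p_t}), R⁽ᵗ⁾ = E⁽ᵗ⁻¹⁾_{:p_t}((E⁽ᵗ⁻¹⁾_{:p_t})ᵀE⁽ᵗ⁻¹⁾_{:p_t})⁻¹(E⁽ᵗ⁻¹⁾_{:p_t})ᵀ, E⁽ᵗ⁾ = E⁽ᵗ⁻¹⁾ − R⁽ᵗ⁾E⁽ᵗ⁻¹⁾, and F⁽ᵗ⁾ = F⁽ᵗ⁻¹⁾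 − R⁽ᵗ⁾F⁽ᵗ⁻¹⁾. Then for every t ≤ l: (E⁽ᵗ⁾)ᵀE⁽ᵗ⁾ = AᵀA − Σ_{s=1}^{t} ω⁽ˢ⁾(ω⁽ˢ⁾)ᵀ and (F⁽ᵗ⁾)ᵀE⁽ᵗ⁾ = BᵀA − Σ_{s=1}^{t} υ⁽ˢ⁾(ω⁽ˢ⁾)ᵀ. In particular, (E⁽ᵗ⁻¹⁾)ᵀE⁽ᵗ⁻¹⁾_{:p_t} = AᵀA_{:p_t} − Σ_{s=1}^{t−1} ω⁽ˢ⁾_{p_t}ω⁽ˢ⁾ and (F⁽ᵗ⁻¹⁾)ᵀE⁽ᵗ⁻¹⁾_{:p_t} = BᵀA_{:p_t} − Σ_{s=1}^{t−1} ω⁽ˢ⁾_{p_t}υ⁽ˢ⁾. -/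
open Matrix

theorem step_aux {m n k : ℕ} (G : Matrix (Fin m) (Fin k) ℝ) (H : Matrix (Fin m) (Fin n) ℝ)
    (e : Fin m → ℝ) (he : 0 < e ⬝ᵥ e) :
    (G - ((e ⬝ᵥ e)⁻¹ • vecMulVec e e) * G)ᵀ * (H - ((e ⬝ᵥ e)⁻¹ • vecMulVec e e) * H) =
      Gᵀ * H - vecMulVec ((Real.sqrt (e ⬝ᵥ e))⁻¹ • (Gᵀ *ᵥ e))
        ((Real.sqrt (e ⬝ᵥ e))⁻¹ • (Hᵀ *ᵥ e)) := by
  have key : ∀ {q : ℕ} (M : Matrix (Fin m) (Fin q) ℝ) (a : Fin m) (i : Fin q),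
      (((e ⬝ᵥ e)⁻¹ • vecMulVec e e) * M) a i = (e ⬝ᵥ e)⁻¹ * e a * (Mᵀ *ᵥ e) i := by
    intro q M a i
    simp only [Matrix.mul_apply, Matrix.smul_apply, vecMulVec_apply, mulVec, dotProduct,
      transpose_apply, smul_eq_mul, Finset.mul_sum]
    refine Finset.sum_congr rfl fun x _ => ?_
    ring
  ext i j
  have hs : (Real.sqrt (e ⬝ᵥ e))⁻¹ * (Real.sqrt (e ⬝ᵥ e))⁻¹ = (e ⬝ᵥ e)⁻¹ := by
    rw [← mul_inv, Real.mul_self_sqrt he.le]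
  have hc : (e ⬝ᵥ e)⁻¹ * (e ⬝ᵥ e) = 1 := inv_mul_cancel₀ he.ne'
  have hg : (Gᵀ *ᵥ e) i = ∑ x, G x i * e x := rfl
  have hh : (Hᵀ *ᵥ e) j = ∑ x, H x j * e x := rfl
  have hd : e ⬝ᵥ e = ∑ x, e x * e x := rfl
  rw [Matrix.mul_apply, Matrix.sub_apply, Matrix.mul_apply, vecMulVec_apply]
  simp only [transpose_apply, Matrix.sub_apply, key, Pi.smul_apply, smul_eq_mul]
  generalize (Gᵀ *ᵥ e) i = g at *
  generalize (Hᵀ *ᵥ e) j = h at *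
  generalize (Real.sqrt (e ⬝ᵥ e))⁻¹ = s at *
  generalize (e ⬝ᵥ e)⁻¹ = c at *
  have : ∑ x, (G x i - c * e x * g) * (H x j - c * e x * h) =
      ∑ x, G x i * H x j - c * h * ∑ x, G x i * e x - c * g * ∑ x, H x j * e x
        + c * c * g * h * ∑ x, e x * e x := by
    simp only [Finset.mul_sum, ← Finset.sum_sub_distrib, ← Finset.sum_add_distrib]
    refine Finset.sum_congr rfl fun x _ => ?_
    ring
  rw [this, ← hg, ← hh, ← hd]
  linear_combination (c * g * h) * hc + g * h * hs

theorem stmt13 {m n r : ℕ} (l : ℕ) (A : Matrix (Fin m) (Fin n) ℝ) (B : Matrix (Fin m) (Fin r) ℝ)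
    (E : ℕ → Matrix (Fin m) (Fin n) ℝ) (F : ℕ → Matrix (Fin m) (Fin r) ℝ)
    (p : ℕ → Fin n) (ω : ℕ → Fin n → ℝ) (υ : ℕ → Fin r → ℝ)
    (hE0 : E 0 = A) (hF0 : F 0 = B)
    (hpos : ∀ t < l, 0 < ((fun i => E t i (p (t + 1))) ⬝ᵥ fun i => E t i (p (t + 1))))
    (hω : ∀ t < l,
      ω (t + 1) =
        (Real.sqrt ((fun i => E t i (p (t + 1))) ⬝ᵥ fun i => E t i (p (t + 1))))⁻¹ •
          ((E t)ᵀ *ᵥ fun i => E t i (p (t + 1))))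
    (hυ : ∀ t < l,
      υ (t + 1) =
        (Real.sqrt ((fun i => E t i (p (t + 1))) ⬝ᵥ fun i => E t i (p (t + 1))))⁻¹ •
          ((F t)ᵀ *ᵥ fun i => E t i (p (t + 1))))
    (hEstep : ∀ t < l,
      E (t + 1) =
        E t - ((((fun i => E t i (p (t + 1))) ⬝ᵥ fun i => E t i (p (t + 1)))⁻¹ •
          vecMulVec (fun i => E t i (p (t + 1))) fun i => E t i (p (t + 1))) * E t))
    (hFstep : ∀ t < l,
      F (t + 1) =
        F t - ((((fun i => E t i (p (t + 1))) ⬝ᵥ fun i => E t i (p (t + 1)))⁻¹ •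
          vecMulVec (fun i => E t i (p (t + 1))) fun i => E t i (p (t + 1))) * F t)) :
    (∀ t ≤ l,
      (E t)ᵀ * E t = Aᵀ * A - ∑ s ∈ Finset.Icc 1 t, vecMulVec (ω s) (ω s) ∧
      (F t)ᵀ * E t = Bᵀ * A - ∑ s ∈ Finset.Icc 1 t, vecMulVec (υ s) (ω s)) ∧
    (∀ t < l,
      ((E t)ᵀ *ᵥ fun i => E t i (p (t + 1))) =
        (Aᵀ *ᵥ fun i => A i (p (t + 1))) - ∑ s ∈ Finset.Icc 1 t, ω s (p (t + 1)) • ω s ∧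
      ((F t)ᵀ *ᵥ fun i => E t i (p (t + 1))) =
        (Bᵀ *ᵥ fun i => A i (p (t + 1))) - ∑ s ∈ Finset.Icc 1 t, ω s (p (t + 1)) • υ s) := by
  have main : ∀ t ≤ l,
      (E t)ᵀ * E t = Aᵀ * A - ∑ s ∈ Finset.Icc 1 t, vecMulVec (ω s) (ω s) ∧
      (F t)ᵀ * E t = Bᵀ * A - ∑ s ∈ Finset.Icc 1 t, vecMulVec (υ s) (ω s) := by
    intro t
    induction t with
    | zero => intro _; simp [hE0, hF0]
    | succ t ih =>
      intro ht
      have ht' : t < l := ht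
      obtain ⟨h1, h2⟩ := ih ht'.le
      rw [Finset.sum_Icc_succ_top (by omega), Finset.sum_Icc_succ_top (by omega),
        ← sub_sub, ← sub_sub, ← h1, ← h2, hω t ht', hυ t ht', hEstep t ht', hFstep t ht']
      exact ⟨step_aux _ _ _ (hpos t ht'), step_aux _ _ _ (hpos t ht')⟩
  refine ⟨main, fun t ht => ?_⟩
  obtain ⟨h1, h2⟩ := main t ht.le
  constructor
  · ext i
    have := congrFun (congrFun h1 i) (p (t + 1))
    rw [Matrix.sub_apply, Matrix.sum_apply] at this
    simp only [vecMulVec_apply] at this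
    rw [Pi.sub_apply, Finset.sum_apply]
    simp only [Pi.smul_apply, smul_eq_mul, mul_comm (ω _ (p (t + 1)))]
    exact this
  · ext i
    have := congrFun (congrFun h2 i) (p (t + 1))
    rw [Matrix.sub_apply, Matrix.sum_apply] at this
    simp only [vecMulVec_apply] at this
    rw [Pi.sub_apply, Finset.sum_apply]
    simp only [Pi.smul_apply, smul_eq_mul, mul_comm (ω _ (p (t + 1)))]
    exact this
end
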